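/- Let f ∈ ℚ_2[x] be a nonzero polynomial. If σ_{ℚ_2}(f) ≤ 2 then f has at most 15 distinct roots in ℚ_2. -/

import Mathlib

open Polynomial

/-- `f` admits a presentation of additive complexity `s` over `L`. -/
def HasAddComplexityPres {L : Type*} [Field L] (f : L[X]) (s : ℕ) : Prop :=
  ∃ (c d : ℕ → L) (m m' : ℕ → ℕ → ℕ) (Xs : ℕ → L[X]),
    Xs 0 = X ∧
    (∀ j, 1 ≤ j → j ≤ s →
      Xs j = C (c j) * ∏ i ∈ Finset.range j, Xs i ^ m i j
           + C (d j) * ∏ i ∈ Finset.range j, Xs i ^ m' i j) ∧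
    f = C (c (s+1)) * ∏ i ∈ Finset.range (s+1), Xs i ^ m i (s+1)

/-- The additive complexity `σ_L(f)`: the least `s` admitting such a presentation. -/
noncomputable def addComplexity {L : Type*} [Field L] (f : L[X]) : ℕ :=
  sInf {s | HasAddComplexityPres f s}


namespace TwoAdicAux

lemma na (x y : ℚ_[2]) : ‖x + y‖ ≤ max ‖x‖ ‖y‖ := Padic.nonarchimedean x y

lemma na_sub (x y : ℚ_[2]) : ‖x - y‖ ≤ max ‖x‖ ‖y‖ := by
  have := na x (-y)
  rwa [norm_neg, ← sub_eq_add_neg] at this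

/-- strict domination -/
lemma norm_dom {x y : ℚ_[2]} (h : ‖y‖ < ‖x‖) : ‖x + y‖ = ‖x‖ := by
  rw [Padic.add_eq_max_of_ne (ne_of_gt h), max_eq_left h.le]

lemma norm_two : ‖(2 : ℚ_[2])‖ = 1 / 2 := by
  have := Padic.norm_p (p := 2)
  norm_num at this ⊢
  exact this

lemma norm_odd {q : ℤ} (hq : Odd q) : ‖(q : ℚ_[2])‖ = 1 := by
  refine le_antisymm (Padic.norm_int_le_one q) ?_
  by_contra! h
  have := (Padic.norm_intCast_lt_one_iff (p := 2) (k := q)).1 h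
  obtain ⟨r, hr⟩ := hq
  omega

lemma norm_even {q : ℤ} (hq : Even q) : ‖(q : ℚ_[2])‖ ≤ 1 / 2 := by
  obtain ⟨r, hr⟩ := hq
  have h := Padic.norm_int_le_one (p := 2) r
  have : (q : ℚ_[2]) = 2 * r := by rw [hr]; push_cast; ring
  rw [this, norm_mul, norm_two]
  linarith

lemma exists_odd_part {n : ℤ} (hn : n ≠ 0) : ∃ (k : ℕ) (q : ℤ), Odd q ∧ n = 2 ^ k * q := by
  have hf : FiniteMultiplicity (2 : ℤ) n := Int.finiteMultiplicity_iff.2 ⟨by norm_num, hn⟩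
  obtain ⟨q, h1, h2⟩ := hf.exists_eq_pow_mul_and_not_dvd
  refine ⟨_, q, ?_, h1⟩
  rw [← Int.not_even_iff_odd, even_iff_two_dvd]
  exact h2

lemma norm_one_of_close {x : ℚ_[2]} (hx : ‖x - 1‖ ≤ 1 / 4) : ‖x‖ = 1 := by
  have : x = 1 + (x - 1) := by ring
  rw [this, norm_dom]
  · simp
  · simp; linarith

lemma ne_zero_of_close {x : ℚ_[2]} (hx : ‖x - 1‖ ≤ 1 / 4) : x ≠ 0 := by
  intro h
  have := norm_one_of_close hx
  rw [h] at this
  simp at this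

/-- the geometric quotient -/
noncomputable def g (q : ℤ) (x : ℚ_[2]) : ℚ_[2] := (x ^ q - 1) / (x - 1)

lemma g_mul {q : ℤ} {x : ℚ_[2]} (hx : x ≠ 1) : g q x * (x - 1) = x ^ q - 1 := by
  unfold g
  have : x - 1 ≠ 0 := sub_ne_zero.2 hx
  field_simp

lemma g_succ {q : ℤ} {x : ℚ_[2]} (h0 : x ≠ 0) (hx : x ≠ 1) : g (q + 1) x = g q x * x + 1 := by
  have h1 : x - 1 ≠ 0 := sub_ne_zero.2 hx
  apply mul_right_cancel₀ h1
  rw [g_mul hx, zpow_add₀ h0, zpow_one]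
  linear_combination (-x) * g_mul (q := q) hx

lemma g_pred {q : ℤ} {x : ℚ_[2]} (h0 : x ≠ 0) (hx : x ≠ 1) :
    g (q - 1) x = (g q x - 1) * x⁻¹ := by
  have := g_succ (q := q - 1) h0 hx
  rw [sub_add_cancel] at this
  rw [this]
  field_simp
  ring

lemma g_close (q : ℤ) {x : ℚ_[2]} (hx : ‖x - 1‖ ≤ 1 / 4) (h1 : x ≠ 1) :
    ‖g q x - q‖ ≤ ‖x - 1‖ := by
  have h0 := ne_zero_of_close hx
  have hn := norm_one_of_close hx
  have bd : ∀ r : ℤ, ‖g r x - r‖ ≤ ‖x - 1‖ → ‖g r x‖ ≤ 1 := by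
    intro r hr
    have : g r x = (g r x - r) + r := by ring
    rw [this]
    refine (na _ _).trans (max_le (by linarith) (Padic.norm_int_le_one r))
  induction q using Int.induction_on with
  | zero => simp [g]
  | succ i ih =>
    have e : g ((i : ℤ) + 1) x - (((i : ℤ) + 1 : ℤ) : ℚ_[2])
        = g i x * (x - 1) + (g i x - ((i : ℤ) : ℚ_[2])) := by
      rw [g_succ h0 h1]; push_cast; ring
    rw [e]
    refine (na _ _).trans (max_le ?_ ih)
    rw [norm_mul]
    exact mul_le_of_le_one_left (norm_nonneg _) (bd _ ih)
  | pred i ih =>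
    have e : g (-(i : ℤ) - 1) x - ((-(i : ℤ) - 1 : ℤ) : ℚ_[2])
        = ((g (-i) x - ((-(i : ℤ) : ℤ) : ℚ_[2])) + ((-(i : ℤ) - 1 : ℤ) : ℚ_[2]) * (1 - x)) * x⁻¹ := by
      rw [g_pred h0 h1]; push_cast; field_simp; ring
    rw [e, norm_mul, norm_inv, hn, inv_one, mul_one]
    refine (na _ _).trans (max_le ih ?_)
    rw [norm_mul, norm_sub_rev 1 x]
    exact mul_le_of_le_one_left (norm_nonneg _) (Padic.norm_int_le_one _)

lemma g_le_one (q : ℤ) {x : ℚ_[2]} (hx : ‖x - 1‖ ≤ 1 / 4) (h1 : x ≠ 1) : ‖g q x‖ ≤ 1 := by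
  have : g q x = (g q x - q) + q := by ring
  rw [this]
  exact (na _ _).trans (max_le (by linarith [g_close q hx h1]) (Padic.norm_int_le_one q))

lemma g_lip (q : ℤ) {x y : ℚ_[2]} (hx : ‖x - 1‖ ≤ 1 / 4) (hx1 : x ≠ 1)
    (hy : ‖y - 1‖ ≤ 1 / 4) (hy1 : y ≠ 1) : ‖g q x - g q y‖ ≤ ‖x - y‖ := by
  have hx0 := ne_zero_of_close hx
  have hy0 := ne_zero_of_close hy
  have hxn := norm_one_of_close hx
  have hyn := norm_one_of_close hy
  induction q using Int.induction_on with
  | zero => simp [g]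
  | succ i ih =>
    have e : g ((i : ℤ) + 1) x - g ((i : ℤ) + 1) y = (g i x - g i y) * x + g i y * (x - y) := by
      rw [g_succ hx0 hx1, g_succ hy0 hy1]; ring
    rw [e]
    refine (na _ _).trans (max_le ?_ ?_)
    · rw [norm_mul, hxn, mul_one]; exact ih
    · rw [norm_mul]
      exact mul_le_of_le_one_left (norm_nonneg _) (g_le_one _ hy hy1)
  | pred i ih =>
    have e : g (-(i : ℤ) - 1) x - g (-(i : ℤ) - 1) y
        = ((g (-i) x - g (-i) y) - g (-(i : ℤ) - 1) y * (x - y)) * x⁻¹ := by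
      rw [g_pred hx0 hx1, g_pred hy0 hy1]; field_simp; ring
    rw [e, norm_mul, norm_inv, hxn, inv_one, mul_one]
    refine (na_sub _ _).trans (max_le ih ?_)
    rw [norm_mul]
    exact mul_le_of_le_one_left (norm_nonneg _) (g_le_one _ hy hy1)

lemma norm_add_one {x : ℚ_[2]} (hx : ‖x - 1‖ ≤ 1 / 4) : ‖x + 1‖ = 1 / 2 := by
  have : x + 1 = 2 + (x - 1) := by ring
  rw [this, norm_dom, norm_two]
  rw [norm_two]; linarith

lemma norm_pow_sub_one (k : ℤ) {x : ℚ_[2]} (hx : ‖x - 1‖ ≤ 1 / 4) :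
    ‖x ^ k - 1‖ = ‖(k : ℚ_[2])‖ * ‖x - 1‖ := by
  by_cases h1 : x = 1
  · simp [h1]
  by_cases hk : k = 0
  · simp [hk]
  obtain ⟨j, q, hq, rfl⟩ := exists_odd_part hk
  induction j with
  | zero =>
    simp only [pow_zero, one_mul]
    rw [← g_mul h1, norm_mul]
    congr 1
    have : g q x = q + (g q x - q) := by ring
    rw [this, norm_dom]
    rw [norm_odd hq]
    linarith [g_close q hx h1]
  | succ j ih =>
    have ih := ih (by rintro h; apply hk; rw [pow_succ, mul_assoc, mul_comm (2 : ℤ), ← mul_assoc, h, zero_mul])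
    have e : x ^ ((2 : ℤ) ^ (j + 1) * q) = (x ^ ((2 : ℤ) ^ j * q)) ^ 2 := by
      rw [← zpow_natCast, ← zpow_mul]; congr 1; push_cast; ring
    have e2 : x ^ ((2 : ℤ) ^ (j + 1) * q) - 1
        = (x ^ ((2 : ℤ) ^ j * q) + 1) * (x ^ ((2 : ℤ) ^ j * q) - 1) := by rw [e]; ring
    have hc : ‖x ^ ((2 : ℤ) ^ j * q) - 1‖ ≤ 1 / 4 := by
      rw [ih]
      exact (mul_le_of_le_one_left (norm_nonneg _) (Padic.norm_int_le_one _)).trans hx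
    rw [e2, norm_mul, norm_add_one hc, ih]
    have e3 : (((2 : ℤ) ^ (j + 1) * q : ℤ) : ℚ_[2]) = 2 * (((2 : ℤ) ^ j * q : ℤ) : ℚ_[2]) := by
      push_cast; ring
    rw [e3, norm_mul, norm_two]; ring

lemma close_pow (k : ℤ) {x : ℚ_[2]} (hx : ‖x - 1‖ ≤ 1 / 4) : ‖x ^ k - 1‖ ≤ 1 / 4 := by
  rw [norm_pow_sub_one k hx]
  exact (mul_le_of_le_one_left (norm_nonneg _) (Padic.norm_int_le_one _)).trans hx

lemma close_div {x y : ℚ_[2]} (hx : ‖x - 1‖ ≤ 1 / 4) (hy : ‖y - 1‖ ≤ 1 / 4) :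
    ‖x / y - 1‖ = ‖x - y‖ ∧ ‖x / y - 1‖ ≤ 1 / 4 := by
  have hy0 := ne_zero_of_close hy
  have e : x / y - 1 = (x - y) / y := by field_simp
  have : ‖x / y - 1‖ = ‖x - y‖ := by rw [e, norm_div, norm_one_of_close hy, div_one]
  refine ⟨this, ?_⟩
  rw [this]
  have e : x - y = (x - 1) - (y - 1) := by ring
  rw [e]
  exact (na_sub _ _).trans (max_le hx hy)

lemma norm_pow_sub_pow (k : ℤ) {x y : ℚ_[2]} (hx : ‖x - 1‖ ≤ 1 / 4) (hy : ‖y - 1‖ ≤ 1 / 4) :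
    ‖x ^ k - y ^ k‖ = ‖(k : ℚ_[2])‖ * ‖x - y‖ := by
  have hy0 := ne_zero_of_close hy
  obtain ⟨h1, h2⟩ := close_div hx hy
  have e : x ^ k - y ^ k = ((x / y) ^ k - 1) * y ^ k := by
    rw [div_zpow]; field_simp
  rw [e, norm_mul, norm_zpow, norm_one_of_close hy, one_zpow, mul_one, norm_pow_sub_one k h2, h1]

lemma g_norm (q : ℤ) {x : ℚ_[2]} (hx : ‖x - 1‖ ≤ 1 / 4) (h1 : x ≠ 1) :
    ‖g q x‖ = ‖(q : ℚ_[2])‖ := by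
  unfold g
  rw [norm_div, norm_pow_sub_one q hx]
  have : ‖x - 1‖ ≠ 0 := norm_ne_zero_iff.2 (sub_ne_zero.2 h1)
  field_simp

lemma g_double (q : ℤ) {x : ℚ_[2]} : g (2 * q) x = g q x * (x ^ q + 1) := by
  unfold g
  have : x ^ (2 * q) = (x ^ q) ^ 2 := by rw [← zpow_natCast, ← zpow_mul]; congr 1; push_cast; ring
  rw [this]; ring

lemma g_even {k : ℕ} {q : ℤ} (hq : Odd q) {x y : ℚ_[2]} (hx : ‖x - 1‖ ≤ 1 / 4) (hx1 : x ≠ 1)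
    (hy : ‖y - 1‖ ≤ 1 / 4) (hy1 : y ≠ 1) (hxy : x ≠ y) :
    ‖g (2 * (2 ^ k * q)) x - g (2 * (2 ^ k * q)) y‖
      = ‖((2 ^ k * q : ℤ) : ℚ_[2])‖ * ‖x - y‖ := by
  have hx0 := ne_zero_of_close hx
  have hy0 := ne_zero_of_close hy
  have hpos : 0 < ‖x - y‖ := norm_pos_iff.2 (sub_ne_zero.2 hxy)
  have key : ∀ m : ℤ, g (2 * m) x - g (2 * m) y
      = g m y * (x ^ m - y ^ m) + (g m x - g m y) * (x ^ m + 1) := by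
    intro m
    rw [g_double, g_double]; ring
  induction k with
  | zero =>
    simp only [pow_zero, one_mul]
    have h1 : ‖g q y * (x ^ q - y ^ q)‖ = ‖x - y‖ := by
      rw [norm_mul, g_norm q hy hy1, norm_pow_sub_pow q hx hy, norm_odd hq, one_mul, one_mul]
    rw [key, norm_dom, h1, norm_odd hq, one_mul]
    rw [h1, norm_mul, norm_add_one (close_pow q hx)]
    have := g_lip q hx hx1 hy hy1
    linarith
  | succ k ih =>
    have e : (2 : ℤ) ^ (k + 1) * q = 2 * (2 ^ k * q) := by ring
    rw [e]
    set m := (2 : ℤ) ^ k * q with hm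
    have hm0 : m ≠ 0 := by
      rw [hm]; refine mul_ne_zero (by positivity) ?_
      rintro rfl; simp at hq
    have hmp : 0 < ‖(m : ℚ_[2])‖ := norm_pos_iff.2 (by exact_mod_cast hm0)
    have h2 : ‖((2 * m : ℤ) : ℚ_[2])‖ = ‖(m : ℚ_[2])‖ / 2 := by
      push_cast; rw [norm_mul, norm_two]; ring
    have h1 : ‖(g (2 * m) x - g (2 * m) y) * (x ^ (2 * m) + 1)‖
        = ‖(m : ℚ_[2])‖ / 2 * ‖x - y‖ := by
      rw [norm_mul, ih, norm_add_one (close_pow _ hx)]; ring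
    rw [key, add_comm, norm_dom, h1, h2]
    rw [h1, norm_mul, g_norm _ hy hy1, norm_pow_sub_pow _ hx hy, h2]
    have : ‖(m : ℚ_[2])‖ ≤ 1 := Padic.norm_int_le_one _
    have : 0 < ‖(m : ℚ_[2])‖ * ‖x - y‖ := by positivity
    nlinarith

/-- two close roots -/
lemma two_roots {β γ x : ℚ_[2]} {m n : ℤ} (hx : ‖x - 1‖ ≤ 1 / 4)
    (hx1 : x ≠ 1) (h : β * (x ^ m - 1) + γ * (x ^ n - 1) = 0) :
    ‖β‖ * ‖(m : ℚ_[2])‖ = ‖γ‖ * ‖(n : ℚ_[2])‖ := by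
  have h1 : β * (x ^ m - 1) = - (γ * (x ^ n - 1)) := by linear_combination h
  have h2 := congrArg norm h1
  rw [norm_neg, norm_mul, norm_mul, norm_pow_sub_one _ hx, norm_pow_sub_one _ hx] at h2
  have : ‖x - 1‖ ≠ 0 := norm_ne_zero_iff.2 (sub_ne_zero.2 hx1)
  apply mul_right_cancel₀ this
  linarith

lemma three_roots {β γ x y : ℚ_[2]} {m n : ℤ} (hγ : γ ≠ 0) (hm : m ≠ 0) (hn : n ≠ 0)
    (hlt : ‖γ‖ < ‖β‖) (hx : ‖x - 1‖ ≤ 1 / 4)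
    (hx1 : x ≠ 1) (hy : ‖y - 1‖ ≤ 1 / 4) (hy1 : y ≠ 1) (hxy : x ≠ y)
    (h1 : β * (x ^ m - 1) + γ * (x ^ n - 1) = 0)
    (h2 : β * (y ^ m - 1) + γ * (y ^ n - 1) = 0) : False := by
  have hnorm := two_roots hx hx1 h1
  obtain ⟨k, n', hn', rfl⟩ := exists_odd_part hn
  obtain ⟨l, m', hm', rfl⟩ := exists_odd_part hm
  have p2 : ∀ (j : ℕ) (q : ℤ), Odd q → ‖(((2 : ℤ) ^ j * q : ℤ) : ℚ_[2])‖ = (1 / 2) ^ j := by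
    intro j q hq
    push_cast
    rw [norm_mul, norm_pow, norm_two, norm_odd hq, mul_one]
  have hγp : 0 < ‖γ‖ := norm_pos_iff.2 hγ
  have hkl : k < l := by
    by_contra! hle
    rw [p2 _ _ hm', p2 _ _ hn'] at hnorm
    have : ((1 : ℝ) / 2) ^ k ≤ (1 / 2) ^ l := pow_le_pow_of_le_one (by norm_num) (by norm_num) hle
    have h3 : (0 : ℝ) < (1 / 2) ^ k := by positivity
    nlinarith
  obtain ⟨d, rfl⟩ := Nat.exists_eq_add_of_lt hkl
  set X := x ^ ((2 : ℤ) ^ k) with hX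
  set Y := y ^ ((2 : ℤ) ^ k) with hY
  have h2k : ‖(((2 : ℤ) ^ k : ℤ) : ℚ_[2])‖ ≠ 0 := by
    have := p2 k 1 odd_one
    rw [mul_one] at this; rw [this]; positivity
  have hXc : ‖X - 1‖ ≤ 1 / 4 := close_pow _ hx
  have hYc : ‖Y - 1‖ ≤ 1 / 4 := close_pow _ hy
  have hX1 : X ≠ 1 := by
    rw [← sub_ne_zero, ← norm_ne_zero_iff, hX, norm_pow_sub_one _ hx]
    exact mul_ne_zero h2k (norm_ne_zero_iff.2 (sub_ne_zero.2 hx1))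
  have hY1 : Y ≠ 1 := by
    rw [← sub_ne_zero, ← norm_ne_zero_iff, hY, norm_pow_sub_one _ hy]
    exact mul_ne_zero h2k (norm_ne_zero_iff.2 (sub_ne_zero.2 hy1))
  have hXY : X ≠ Y := by
    rw [← sub_ne_zero, ← norm_ne_zero_iff, hX, hY, norm_pow_sub_pow _ hx hy]
    exact mul_ne_zero h2k (norm_ne_zero_iff.2 (sub_ne_zero.2 hxy))
  have em : (2 : ℤ) ^ (k + d + 1) * m' = 2 ^ k * (2 * (2 ^ d * m')) := by ring
  rw [em, zpow_mul, zpow_mul _ _ n', ← hX] at h1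
  rw [em, zpow_mul, zpow_mul _ _ n', ← hY] at h2
  have r1 := two_roots hXc hX1 h1
  rw [← g_mul hX1, ← g_mul hX1] at h1
  rw [← g_mul hY1, ← g_mul hY1] at h2
  have h1' : β * g (2 * (2 ^ d * m')) X + γ * g n' X = 0 := by
    apply mul_right_cancel₀ (sub_ne_zero.2 hX1); linear_combination h1
  have h2' : β * g (2 * (2 ^ d * m')) Y + γ * g n' Y = 0 := by
    apply mul_right_cancel₀ (sub_ne_zero.2 hY1); linear_combination h2
  have h3 : β * (g (2 * (2 ^ d * m')) X - g (2 * (2 ^ d * m')) Y) = - (γ * (g n' X - g n' Y)) := by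
    linear_combination h1' - h2'
  have h4 := congrArg norm h3
  rw [norm_neg, norm_mul, norm_mul, g_even hm' hXc hX1 hYc hY1 hXY] at h4
  have h5 := g_lip n' hXc hX1 hYc hY1
  have hpos : 0 < ‖X - Y‖ := norm_pos_iff.2 (sub_ne_zero.2 hXY)
  have h6 : ‖((2 * (2 ^ d * m') : ℤ) : ℚ_[2])‖ = ‖((2 ^ d * m' : ℤ) : ℚ_[2])‖ / 2 := by
    rw [Int.cast_mul, norm_mul]; norm_num [norm_two]; ring
  rw [h6, norm_odd hn', mul_one] at r1
  have h7 : ‖γ‖ * ‖g n' X - g n' Y‖ ≤ ‖γ‖ * ‖X - Y‖ := by gcongr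
  have h8 : 0 < ‖γ‖ * ‖X - Y‖ := by positivity
  rw [← h4, ← mul_assoc] at h7
  have : ‖β‖ * ‖((2 ^ d * m' : ℤ) : ℚ_[2])‖ = 2 * ‖γ‖ := by linarith
  rw [this] at h7
  linarith

lemma parity {w : ℚ_[2]} (hw : ‖w‖ ≤ 1) : ‖w‖ ≤ 1 / 2 ∨ ‖w - 1‖ ≤ 1 / 2 := by
  have half : ∀ z : ℚ_[2], ‖z‖ < 1 → ‖z‖ ≤ 1 / 2 := by
    intro z hz
    have := (Padic.norm_le_pow_iff_norm_lt_pow_add_one z (-1)).2 (by simpa using hz)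
    simpa using this
  obtain ⟨v, rfl⟩ : ∃ v : ℤ_[2], (v : ℚ_[2]) = w := ⟨⟨w, hw⟩, rfl⟩
  have h1 := PadicInt.norm_sub_zmodRepr_lt_one v
  have h2 := PadicInt.zmodRepr_lt_p v
  rw [PadicInt.norm_def, PadicInt.coe_sub, PadicInt.coe_natCast] at h1
  generalize PadicInt.zmodRepr v = r at h1 h2
  interval_cases r
  · left; apply half; simpa using h1
  · right; apply half; simpa using h1

lemma unit_sub_one {u : ℚ_[2]} (hu : ‖u‖ = 1) : ‖u - 1‖ ≤ 1 / 2 := by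
  rcases parity hu.le with h | h
  · rw [hu] at h; norm_num at h
  · exact h

lemma unit_mod_four {u : ℚ_[2]} (hu : ‖u‖ = 1) : ‖u - 1‖ ≤ 1 / 4 ∨ ‖u + 1‖ ≤ 1 / 4 := by
  have h := unit_sub_one hu
  have hw : ‖(u - 1) / 2‖ ≤ 1 := by
    rw [norm_div, norm_two]; linarith
  have e1 : ‖u - 1‖ = 1 / 2 * ‖(u - 1) / 2‖ := by
    rw [norm_div, norm_two]; ring
  have e2 : ‖u + 1‖ ≤ 1 / 2 * max ‖(u - 1) / 2 - 1‖ (1 / 2) := by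
    have : u + 1 = 2 * (((u - 1) / 2 - 1) + 2) := by ring
    rw [this, norm_mul, norm_two]
    gcongr
    have := na ((u - 1) / 2 - 1) 2
    rwa [norm_two] at this
  rcases parity hw with h | h
  · left; linarith
  · right
    rw [max_eq_right h] at e2; linarith

lemma three_terms {P Q S : ℚ_[2]} (hQ : Q ≠ 0) (h : P + Q + S = 0) :
    (‖P‖ = ‖Q‖ ∧ ‖S‖ < ‖Q‖) ∨ (‖Q‖ = ‖S‖ ∧ ‖P‖ < ‖S‖) ∨ (‖S‖ = ‖P‖ ∧ ‖Q‖ < ‖P‖) := by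
  have key : ∀ A B D : ℚ_[2], A + B + D = 0 → ‖A‖ ≤ max ‖B‖ ‖D‖ := by
    intro A B D hh
    have : A = -(B + D) := by linear_combination hh
    rw [this, norm_neg]; exact na _ _
  have h1 := key P Q S h
  have h2 := key Q S P (by linear_combination h)
  have h3 := key S P Q (by linear_combination h)
  have h4 : ¬ (‖P‖ = ‖Q‖ ∧ ‖S‖ = ‖Q‖) := by
    rintro ⟨e1, e2⟩
    have hQn : ‖Q‖ ≠ 0 := norm_ne_zero_iff.2 hQ
    have u1 := unit_sub_one (u := P / Q) (by rw [norm_div, e1, div_self hQn])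
    have u2 := unit_sub_one (u := S / Q) (by rw [norm_div, e2, div_self hQn])
    have e : (3 : ℚ_[2]) = -((P / Q - 1) + (S / Q - 1)) := by
      field_simp; linear_combination h
    have n3 : ‖(3 : ℚ_[2])‖ = 1 := by
      have := norm_odd (q := 3) (by decide)
      exact_mod_cast this
    rw [e, norm_neg] at n3
    have := (na (P / Q - 1) (S / Q - 1)).trans (max_le u1 u2)
    linarith
  rcases le_max_iff.1 h1 with h1 | h1 <;> rcases le_max_iff.1 h2 with h2 | h2 <;>
    rcases le_max_iff.1 h3 with h3 | h3 <;>
    by_contra! hc <;> obtain ⟨c1, c2, c3⟩ := hc <;>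
    apply h4 <;> constructor <;> apply le_antisymm <;> grind

/-- `t` is a root at which the third term is the smallest. -/
def IsT (a b c : ℚ_[2]) (i j k : ℤ) (t : ℚ_[2]) : Prop :=
  t ≠ 0 ∧ a * t ^ i + b * t ^ j + c * t ^ k = 0 ∧ ‖a * t ^ i‖ = ‖b * t ^ j‖ ∧
    ‖c * t ^ k‖ < ‖b * t ^ j‖

lemma isT_ratio {a b c : ℚ_[2]} {i j k : ℤ} {t x : ℚ_[2]} (ht : IsT a b c i j k t)
    (hx : IsT a b c i j k x) :
    (b * t ^ j) * ((x / t) ^ (j - i) - 1) + (c * t ^ k) * ((x / t) ^ (k - i) - 1) = 0 := by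
  obtain ⟨t0, et, -, -⟩ := ht
  obtain ⟨x0, ex, -, -⟩ := hx
  have hr : x / t ≠ 0 := div_ne_zero x0 t0
  have hx' : x = t * (x / t) := by field_simp
  generalize x / t = r at hr hx'
  subst hx'
  rw [mul_zpow, mul_zpow, mul_zpow] at ex
  rw [zpow_sub₀ hr, zpow_sub₀ hr]
  have : r ^ i ≠ 0 := zpow_ne_zero _ hr
  field_simp
  linear_combination ex - r ^ i * et

lemma class_count {a b c : ℚ_[2]} {i j k : ℤ} (hc : c ≠ 0)
    (hij : j ≠ i) (hik : k ≠ i) (F : Finset ℚ_[2]) (hF : ∀ t ∈ F, IsT a b c i j k t)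
    (hcl : ∀ x ∈ F, ∀ y ∈ F, ‖x / y - 1‖ ≤ 1 / 4) :
    F.card ≤ 2 ∧ (1 < F.card → ‖((j - i : ℤ) : ℚ_[2])‖ < ‖((k - i : ℤ) : ℚ_[2])‖) := by
  have dne : ∀ {x t : ℚ_[2]}, t ≠ 0 → t ≠ x → x / t ≠ 1 := by
    intro x t h0 h h'
    rw [div_eq_one_iff_eq h0] at h'
    exact h h'.symm
  constructor
  · by_contra! h
    obtain ⟨t, ht, x, hx, y, hy, htx, hty, hxy⟩ := Finset.two_lt_card.1 h
    have t0 := (hF t ht).1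
    refine three_roots (β := b * t ^ j) (γ := c * t ^ k) (x := x / t) (y := y / t)
      (m := j - i) (n := k - i) (mul_ne_zero hc (zpow_ne_zero _ t0)) (sub_ne_zero.2 hij)
      (sub_ne_zero.2 hik) (hF t ht).2.2.2 (hcl _ hx _ ht) (dne t0 htx) (hcl _ hy _ ht)
      (dne t0 hty) ?_ (isT_ratio (hF t ht) (hF x hx)) (isT_ratio (hF t ht) (hF y hy))
    intro h
    exact hxy ((div_left_inj' t0).1 h)
  · intro h
    obtain ⟨t, ht, x, hx, htx⟩ := Finset.one_lt_card.1 h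
    have t0 := (hF t ht).1
    have h1 := two_roots (hcl _ hx _ ht) (dne t0 htx) (isT_ratio (hF t ht) (hF x hx))
    have h2 := (hF t ht).2.2.2
    have hk : 0 < ‖((k - i : ℤ) : ℚ_[2])‖ := norm_pos_iff.2 (by exact_mod_cast sub_ne_zero.2 hik)
    have h3 : 0 ≤ ‖c * t ^ k‖ := norm_nonneg _
    by_contra! h4
    nlinarith

lemma isT_norm {a b c : ℚ_[2]} {i j k : ℤ} (ha : a ≠ 0)
    (hij : j ≠ i) {t x : ℚ_[2]} (ht : IsT a b c i j k t)
    (hx : IsT a b c i j k x) : ‖x / t‖ = 1 := by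
  have h1 := ht.2.2.1
  have h2 := hx.2.2.1
  have t0 := norm_pos_iff.2 ht.1
  have x0 := norm_pos_iff.2 hx.1
  have ha' : ‖a‖ ≠ 0 := norm_ne_zero_iff.2 ha
  rw [norm_mul, norm_mul, norm_zpow, norm_zpow] at h1 h2
  have hb' : ‖b‖ ≠ 0 := by
    intro hb
    rw [hb, zero_mul] at h1
    exact (mul_ne_zero ha' (zpow_ne_zero _ t0.ne')) h1
  have e : ‖x‖ ^ (j - i) = ‖t‖ ^ (j - i) := by
    rw [zpow_sub₀ x0.ne', zpow_sub₀ t0.ne']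
    rw [div_eq_div_iff (zpow_ne_zero _ x0.ne') (zpow_ne_zero _ t0.ne')]
    apply mul_left_cancel₀ hb'
    apply mul_left_cancel₀ ha'
    linear_combination ‖a‖ * ‖x‖ ^ i * h1 - ‖a‖ * ‖t‖ ^ i * h2
  rw [zpow_left_inj₀ x0.le t0.le (sub_ne_zero.2 hij)] at e
  rw [norm_div, e, div_self t0.ne']

lemma type_count {a b c : ℚ_[2]} {i j k : ℤ} (ha : a ≠ 0) (hc : c ≠ 0)
    (hij : j ≠ i) (hik : k ≠ i) (F : Finset ℚ_[2]) (hF : ∀ t ∈ F, IsT a b c i j k t) :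
    F.card ≤ 4 ∧ (2 < F.card → ‖((j - i : ℤ) : ℚ_[2])‖ < ‖((k - i : ℤ) : ℚ_[2])‖) := by
  classical
  rcases F.eq_empty_or_nonempty with rfl | ⟨t, ht⟩
  · simp
  have t0 := (hF t ht).1
  set F1 := F.filter (fun x => ‖x / t - 1‖ ≤ 1 / 4)
  set F2 := F.filter (fun x => ‖-(x / t) - 1‖ ≤ 1 / 4)
  have hsub : F ⊆ F1 ∪ F2 := by
    intro x hx
    rcases unit_mod_four (isT_norm ha hij (hF t ht) (hF x hx)) with h | h
    · exact Finset.mem_union_left _ (Finset.mem_filter.2 ⟨hx, h⟩)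
    · refine Finset.mem_union_right _ (Finset.mem_filter.2 ⟨hx, ?_⟩)
      rwa [← norm_neg, neg_sub, sub_neg_eq_add, add_comm]
  have hcard := (Finset.card_le_card hsub).trans (Finset.card_union_le _ _)
  have c1 := class_count hc hij hik F1 (fun x hx => hF x (Finset.mem_filter.1 hx).1) (by
    intro x hx y hy
    have := (close_div (Finset.mem_filter.1 hx).2 (Finset.mem_filter.1 hy).2).2
    rwa [div_div_div_cancel_right₀ t0] at this)
  have c2 := class_count hc hij hik F2 (fun x hx => hF x (Finset.mem_filter.1 hx).1) (by
    intro x hx y hy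
    have := (close_div (Finset.mem_filter.1 hx).2 (Finset.mem_filter.1 hy).2).2
    rwa [neg_div_neg_eq, div_div_div_cancel_right₀ t0] at this)
  refine ⟨by omega, fun h => ?_⟩
  by_cases h1 : 1 < F1.card
  · exact c1.2 h1
  · exact c2.2 (by omega)

lemma isT_log {a b c : ℚ_[2]} {i j k : ℤ} {t : ℚ_[2]} (ha : a ≠ 0) (hb : b ≠ 0) (hc : c ≠ 0)
    (ht : IsT a b c i j k t) :
    Real.log ‖a‖ + i * Real.log ‖t‖ = Real.log ‖b‖ + j * Real.log ‖t‖ ∧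
    Real.log ‖c‖ + k * Real.log ‖t‖ < Real.log ‖b‖ + j * Real.log ‖t‖ := by
  have t0 := norm_ne_zero_iff.2 ht.1
  have key : ∀ (d : ℚ_[2]) (l : ℤ), d ≠ 0 →
      Real.log ‖d * t ^ l‖ = Real.log ‖d‖ + l * Real.log ‖t‖ := by
    intro d l hd
    rw [norm_mul, norm_zpow, Real.log_mul (norm_ne_zero_iff.2 hd) (zpow_ne_zero _ t0), Real.log_zpow]
  rw [← key a i ha, ← key b j hb, ← key c k hc]
  refine ⟨by rw [ht.2.2.1], Real.log_lt_log (norm_pos_iff.2 (mul_ne_zero hc (zpow_ne_zero _ ht.1))) ht.2.2.2⟩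

lemma lines_aux {A B D i j k p q r : ℝ} (h1 : A + i * p = B + j * p) (h1' : D + k * p < B + j * p)
    (h2 : B + j * q = D + k * q) (h2' : A + i * q < D + k * q)
    (h3 : D + k * r = A + i * r) (h3' : B + j * r < A + i * r) : False := by
  have a1 : (i - j) * (q - p) < 0 := by nlinarith
  have a2 : 0 < (i - j) * (r - p) := by nlinarith
  have b1 : (j - k) * (r - q) < 0 := by nlinarith
  have b2 : 0 < (j - k) * (p - q) := by nlinarith
  have hA : (r - p) * (q - p) < 0 := by
    have := mul_neg_of_neg_of_pos a1 a2
    have h : (i - j) * (q - p) * ((i - j) * (r - p)) = (i - j) ^ 2 * ((r - p) * (q - p)) := by ring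
    rw [h] at this
    by_contra! hc
    have := mul_nonneg (sq_nonneg (i - j)) hc
    linarith
  have hB : (p - q) * (r - q) < 0 := by
    have := mul_neg_of_neg_of_pos b1 b2
    have h : (j - k) * (r - q) * ((j - k) * (p - q)) = (j - k) ^ 2 * ((p - q) * (r - q)) := by ring
    rw [h] at this
    by_contra! hc
    have := mul_nonneg (sq_nonneg (j - k)) hc
    linarith
  nlinarith [sq_nonneg (p - q)]

lemma trinomial_count {a b c : ℚ_[2]} {i j k : ℤ} (ha : a ≠ 0) (hb : b ≠ 0) (hc : c ≠ 0)
    (hij : j ≠ i) (hik : k ≠ i) (hjk : k ≠ j) (F : Finset ℚ_[2])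
    (hF : ∀ t ∈ F, t ≠ 0 ∧ a * t ^ i + b * t ^ j + c * t ^ k = 0) : F.card ≤ 6 := by
  classical
  set F1 := F.filter (fun x => IsT a b c i j k x)
  set F2 := F.filter (fun x => IsT b c a j k i x)
  set F3 := F.filter (fun x => IsT c a b k i j x)
  have hsub : F ⊆ F1 ∪ F2 ∪ F3 := by
    intro t ht
    obtain ⟨t0, e⟩ := hF t ht
    have := three_terms (mul_ne_zero hb (zpow_ne_zero j t0)) e
    simp only [Finset.mem_union, F1, F2, F3, Finset.mem_filter, ht, true_and]
    rcases this with h | h | h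
    · exact Or.inl (Or.inl ⟨t0, e, h⟩)
    · exact Or.inl (Or.inr ⟨t0, by linear_combination e, h⟩)
    · exact Or.inr ⟨t0, by linear_combination e, h⟩
  have hcard := (Finset.card_le_card hsub).trans ((Finset.card_union_le _ _).trans
    (Nat.add_le_add_right (Finset.card_union_le _ _) _))
  have m1 : ∀ x ∈ F1, IsT a b c i j k x := fun x hx => (Finset.mem_filter.1 hx).2
  have m2 : ∀ x ∈ F2, IsT b c a j k i x := fun x hx => (Finset.mem_filter.1 hx).2
  have m3 : ∀ x ∈ F3, IsT c a b k i j x := fun x hx => (Finset.mem_filter.1 hx).2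
  have hemp : F1.card = 0 ∨ F2.card = 0 ∨ F3.card = 0 := by
    by_contra! h
    obtain ⟨n1, n2, n3⟩ := h
    obtain ⟨p, hp⟩ := Finset.card_ne_zero.1 n1
    obtain ⟨q, hq⟩ := Finset.card_ne_zero.1 n2
    obtain ⟨r, hr⟩ := Finset.card_ne_zero.1 n3
    obtain ⟨h1, h1'⟩ := isT_log ha hb hc (m1 p hp)
    obtain ⟨h2, h2'⟩ := isT_log hb hc ha (m2 q hq)
    obtain ⟨h3, h3'⟩ := isT_log hc ha hb (m3 r hr)
    exact lines_aux h1 h1' h2 h2' h3 h3'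
  obtain ⟨c1, d1⟩ := type_count ha hc hij hik F1 m1
  obtain ⟨c2, d2⟩ := type_count hb ha hjk hij.symm F2 m2
  obtain ⟨c3, d3⟩ := type_count hc hb hik.symm hjk.symm F3 m3
  have sw : ∀ x y : ℤ, ‖((x - y : ℤ) : ℚ_[2])‖ = ‖((y - x : ℤ) : ℚ_[2])‖ := by
    intro x y; rw [← norm_neg]; push_cast; rw [neg_sub]
  have ultra : ∀ x y z : ℤ, ‖((x - z : ℤ) : ℚ_[2])‖ ≤
      max ‖((x - y : ℤ) : ℚ_[2])‖ ‖((y - z : ℤ) : ℚ_[2])‖ := by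
    intro x y z
    have : ((x - z : ℤ) : ℚ_[2]) = ((x - y : ℤ) : ℚ_[2]) + ((y - z : ℤ) : ℚ_[2]) := by
      push_cast; ring
    rw [this]; exact na _ _
  have u1 := ultra j k i
  have u2 := ultra k i j
  have u3 := ultra i j k
  rw [sw j k] at u1
  rw [sw k i] at u2
  rw [sw i j] at u3
  rw [sw i j] at d2
  rw [sw k i] at d1
  rw [sw j k] at d3
  rw [sw k i] at u1
  rw [sw i j] at u2
  rw [sw j k] at u3
  generalize ‖((j - i : ℤ) : ℚ_[2])‖ = P at *
  generalize ‖((k - j : ℤ) : ℚ_[2])‖ = Q at *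
  generalize ‖((i - k : ℤ) : ℚ_[2])‖ = S at *
  have no12 : ¬ (2 < F1.card ∧ 2 < F2.card) := by
    rintro ⟨h1, h2⟩; have := d1 h1; have := d2 h2
    rcases le_max_iff.1 u2 with h | h <;> rcases le_max_iff.1 u3 with h' | h' <;> linarith
  have no13 : ¬ (2 < F1.card ∧ 2 < F3.card) := by
    rintro ⟨h1, h2⟩; have := d1 h1; have := d3 h2
    rcases le_max_iff.1 u2 with h | h <;> rcases le_max_iff.1 u3 with h' | h' <;>
      rcases le_max_iff.1 u1 with h'' | h'' <;> linarith
  have no23 : ¬ (2 < F2.card ∧ 2 < F3.card) := by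
    rintro ⟨h1, h2⟩; have := d2 h1; have := d3 h2
    rcases le_max_iff.1 u2 with h | h <;> rcases le_max_iff.1 u3 with h' | h' <;>
      rcases le_max_iff.1 u1 with h'' | h'' <;> linarith
  omega

lemma root_unity {r : ℚ_[2]} {N : ℤ} (hN : N ≠ 0) (h : r ^ N = 1) : r = 1 ∨ r = -1 := by
  have hr : ‖r‖ = 1 := by
    have := congrArg norm h
    rw [norm_zpow, norm_one, ← one_zpow N, zpow_left_inj₀ (norm_nonneg _) zero_le_one hN] at this
    exact this
  have key : ∀ s : ℚ_[2], ‖s - 1‖ ≤ 1 / 4 → s ^ (2 * N) = 1 → s = 1 := by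
    intro s hs h
    have h1 := norm_pow_sub_one (2 * N) hs
    rw [h, sub_self, norm_zero] at h1
    rcases mul_eq_zero.1 h1.symm with h2 | h2
    · rw [norm_eq_zero] at h2
      have : 2 * N = 0 := by exact_mod_cast h2
      omega
    · exact sub_eq_zero.1 (norm_eq_zero.1 h2)
  have h2 : r ^ (2 * N) = 1 := by rw [mul_comm, zpow_mul, h, one_zpow]
  rcases unit_mod_four hr with h3 | h3
  · exact Or.inl (key r h3 h2)
  · right
    have := key (-r) (by rw [← norm_neg, neg_sub, sub_neg_eq_add, add_comm]; exact h3)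
      (by rw [(even_two_mul N).neg_zpow]; exact h2)
    rw [← this, neg_neg]

lemma binom_count {w : ℚ_[2]} {N : ℤ} (hN : N ≠ 0) (F : Finset ℚ_[2])
    (hF : ∀ t ∈ F, t ≠ 0 ∧ t ^ N = w) : F.card ≤ 2 := by
  classical
  rcases F.eq_empty_or_nonempty with rfl | ⟨t, ht⟩
  · simp
  obtain ⟨t0, et⟩ := hF t ht
  have : F ⊆ {t, -t} := by
    intro x hx
    obtain ⟨x0, ex⟩ := hF x hx
    have h : (x / t) ^ N = 1 := by
      rw [div_zpow, ex, et, div_self]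
      rw [← et]; exact zpow_ne_zero _ t0
    rw [Finset.mem_insert, Finset.mem_singleton]
    rcases root_unity hN h with h | h
    · left; rwa [div_eq_one_iff_eq t0] at h
    · right; rw [div_eq_iff t0] at h; rw [h]; ring
  exact (Finset.card_le_card this).trans Finset.card_le_two

lemma two_term {a b : ℚ_[2]} {i j : ℤ} (hij : i ≠ j) (hab : a ≠ 0 ∨ b ≠ 0) (F : Finset ℚ_[2])
    (hF : ∀ t ∈ F, t ≠ 0 ∧ a * t ^ i + b * t ^ j = 0) : F.card ≤ 2 := by
  by_cases ha : a = 0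
  · have hb : b ≠ 0 := by simpa [ha] using hab
    rw [Finset.card_eq_zero.2]
    · norm_num
    refine Finset.eq_empty_of_forall_notMem fun t ht => ?_
    obtain ⟨t0, e⟩ := hF t ht
    rw [ha, zero_mul, zero_add] at e
    exact mul_ne_zero hb (zpow_ne_zero _ t0) e
  · refine binom_count (w := -b / a) (sub_ne_zero.2 hij) F fun t ht => ?_
    obtain ⟨t0, e⟩ := hF t ht
    refine ⟨t0, ?_⟩
    rw [zpow_sub₀ t0]
    have := zpow_ne_zero j t0
    field_simp
    linear_combination e

lemma trinomial_count' {a b c : ℚ_[2]} {i j k : ℤ} (ha : a ≠ 0) (hb : b ≠ 0) (hc : c ≠ 0)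
    (hne : ¬ (i = j ∧ j = k)) (F : Finset ℚ_[2])
    (hF : ∀ t ∈ F, t ≠ 0 ∧ a * t ^ i + b * t ^ j + c * t ^ k = 0) : F.card ≤ 6 := by
  by_cases hij : i = j
  · subst hij
    refine (two_term (a := a + b) (b := c) (i := i) (j := k) (by tauto) (Or.inr hc) F
      fun t ht => ⟨(hF t ht).1, ?_⟩).trans (by norm_num)
    linear_combination (hF t ht).2
  by_cases hik : i = k
  · subst hik
    refine (two_term (a := a + c) (b := b) (i := i) (j := j) hij (Or.inr hb) F
      fun t ht => ⟨(hF t ht).1, ?_⟩).trans (by norm_num)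
    linear_combination (hF t ht).2
  by_cases hjk : j = k
  · subst hjk
    refine (two_term (a := a) (b := b + c) (i := i) (j := j) hij (Or.inl ha) F
      fun t ht => ⟨(hF t ht).1, ?_⟩).trans (by norm_num)
    linear_combination (hF t ht).2
  exact trinomial_count ha hb hc (Ne.symm hij) (Ne.symm hik) (Ne.symm hjk) F hF

lemma coset_count {c d : ℚ_[2]} {m n α β p k : ℤ} (hc : c ≠ 0) (hd : d ≠ 0) (hmn : m ≠ n)
    (hbz : p * α + k * β = 1) (Y : ℚ_[2] → ℚ_[2]) (F : Finset ℚ_[2])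
    (hF : ∀ x ∈ F, x ≠ 0 ∧ Y x ≠ 0 ∧ Y x = c * x ^ m + d * x ^ n)
    (hw : ∀ x ∈ F, ∀ x' ∈ F, x ^ α / Y x ^ β = x' ^ α / Y x' ^ β) : F.card ≤ 6 := by
  classical
  rcases F.eq_empty_or_nonempty with rfl | ⟨z, hz⟩
  · simp
  obtain ⟨z0, y0, ez⟩ := hF z hz
  set τ : ℚ_[2] → ℚ_[2] := fun x => (Y x / Y z) ^ p * (x / z) ^ k with hτ
  have key : ∀ x ∈ F, τ x ^ β = x / z ∧ τ x ^ α = Y x / Y z ∧ τ x ≠ 0 := by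
    intro x hx
    obtain ⟨x0, yx, ex⟩ := hF x hx
    have hr : x / z ≠ 0 := div_ne_zero x0 z0
    have hq : Y x / Y z ≠ 0 := div_ne_zero yx y0
    have e : (x / z) ^ α = (Y x / Y z) ^ β := by
      have := hw x hx z hz
      rw [div_eq_div_iff (zpow_ne_zero _ yx) (zpow_ne_zero _ y0)] at this
      rw [div_zpow, div_zpow, div_eq_div_iff (zpow_ne_zero _ z0) (zpow_ne_zero _ y0)]
      linear_combination this
    simp only [hτ]
    generalize x / z = r at *
    generalize Y x / Y z = s at *
    refine ⟨?_, ?_, mul_ne_zero (zpow_ne_zero _ hq) (zpow_ne_zero _ hr)⟩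
    · calc (s ^ p * r ^ k) ^ β = (s ^ β) ^ p * r ^ (k * β) := by
            rw [mul_zpow, ← zpow_mul, ← zpow_mul, ← zpow_mul, mul_comm p β]
        _ = r ^ (p * α + k * β) := by
            rw [← e, ← zpow_mul, mul_comm α p, ← zpow_add₀ hr]
        _ = r := by rw [hbz, zpow_one]
    · calc (s ^ p * r ^ k) ^ α = s ^ (p * α) * (r ^ α) ^ k := by
            rw [mul_zpow, ← zpow_mul, ← zpow_mul, ← zpow_mul, mul_comm k α]
        _ = s ^ (p * α + k * β) := by
            rw [e, ← zpow_mul, mul_comm β k, ← zpow_add₀ hq]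
        _ = s := by rw [hbz, zpow_one]
  have hinj : Set.InjOn τ F := by
    intro x hx x' hx' h
    have h1 := (key x hx).1
    rw [h, (key x' hx').1] at h1
    exact ((div_left_inj' z0).1 h1).symm
  rw [← Finset.card_image_of_injOn hinj]
  refine trinomial_count' (a := c * z ^ m) (b := d * z ^ n) (c := - Y z) (i := β * m) (j := β * n)
    (k := α) (mul_ne_zero hc (zpow_ne_zero _ z0)) (mul_ne_zero hd (zpow_ne_zero _ z0))
    (neg_ne_zero.2 y0) ?_ _ ?_
  · rintro ⟨h1, h2⟩
    have hβ : β = 0 := by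
      by_contra hβ
      exact hmn (mul_left_cancel₀ hβ h1)
    rw [← h2, hβ] at hbz
    simp at hbz
  · intro t ht
    obtain ⟨x, hx, rfl⟩ := Finset.mem_image.1 ht
    obtain ⟨k1, k2, k3⟩ := key x hx
    obtain ⟨x0, yx, ex⟩ := hF x hx
    refine ⟨k3, ?_⟩
    rw [zpow_mul, zpow_mul, k1, k2, div_zpow, div_zpow]
    have := zpow_ne_zero m z0
    have := zpow_ne_zero n z0
    field_simp
    linear_combination -ex

lemma pair_count {c d γ : ℚ_[2]} {m n α β : ℤ} (hc : c ≠ 0) (hd : d ≠ 0) (hmn : m ≠ n)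
    (hab : ¬ (α = 0 ∧ β = 0)) (Y : ℚ_[2] → ℚ_[2]) (F : Finset ℚ_[2])
    (hF : ∀ x ∈ F, x ≠ 0 ∧ Y x ≠ 0 ∧ Y x = c * x ^ m + d * x ^ n)
    (hγ : ∀ x ∈ F, x ^ α / Y x ^ β = γ) : F.card ≤ 12 := by
  classical
  have hg : 0 < Int.gcd α β := by
    rw [Nat.pos_iff_ne_zero, Ne, Int.gcd_eq_zero_iff]; exact hab
  obtain ⟨α', β', hco, eα, eβ⟩ := Int.exists_gcd_one hg
  obtain ⟨p, k, hbz⟩ := Int.isCoprime_iff_gcd_eq_one.2 hco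
  rcases F.eq_empty_or_nonempty with rfl | ⟨z, hz⟩
  · simp
  set w : ℚ_[2] → ℚ_[2] := fun x => x ^ α' / Y x ^ β' with hwdef
  have w0 : ∀ x ∈ F, w x ≠ 0 := fun x hx =>
    div_ne_zero (zpow_ne_zero _ (hF x hx).1) (zpow_ne_zero _ (hF x hx).2.1)
  have wg : ∀ x ∈ F, w x ^ (Int.gcd α β : ℤ) = γ := by
    intro x hx
    rw [← hγ x hx]
    simp only [hwdef]
    rw [div_zpow, ← zpow_mul, ← zpow_mul, ← eα, ← eβ]
  set F1 := F.filter (fun x => w x = w z)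
  set F2 := F.filter (fun x => w x = - w z)
  have hsub : F ⊆ F1 ∪ F2 := by
    intro x hx
    have h : (w x / w z) ^ (Int.gcd α β : ℤ) = 1 := by
      rw [div_zpow, wg x hx, wg z hz, div_self]
      rw [← wg z hz]; exact zpow_ne_zero _ (w0 z hz)
    rcases root_unity (by exact_mod_cast hg.ne') h with h | h
    · rw [div_eq_one_iff_eq (w0 z hz)] at h
      exact Finset.mem_union_left _ (Finset.mem_filter.2 ⟨hx, h⟩)
    · rw [div_eq_iff (w0 z hz)] at h
      exact Finset.mem_union_right _ (Finset.mem_filter.2 ⟨hx, by rw [h]; ring⟩)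
  have hcard := (Finset.card_le_card hsub).trans (Finset.card_union_le _ _)
  have c1 : F1.card ≤ 6 := coset_count hc hd hmn hbz Y F1
    (fun x hx => hF x (Finset.mem_filter.1 hx).1)
    (fun x hx x' hx' => (Finset.mem_filter.1 hx).2.trans (Finset.mem_filter.1 hx').2.symm)
  have c2 : F2.card ≤ 6 := coset_count hc hd hmn hbz Y F2
    (fun x hx => hF x (Finset.mem_filter.1 hx).1)
    (fun x hx x' hx' => (Finset.mem_filter.1 hx).2.trans (Finset.mem_filter.1 hx').2.symm)
  omega

lemma bpoly_count {a b : ℚ_[2]} {p q : ℕ} {P : ℚ_[2][X]} (hP : P = C a * X ^ p + C b * X ^ q)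
    (hP0 : P ≠ 0) (F : Finset ℚ_[2]) (hF : ∀ x ∈ F, x ≠ 0 ∧ P.eval x = 0) : F.card ≤ 2 := by
  have ev : ∀ x, P.eval x = a * x ^ p + b * x ^ q := by intro x; rw [hP]; simp
  by_cases hpq : p = q
  · subst hpq
    have hab : a + b ≠ 0 := by
      intro h
      apply hP0
      rw [hP, ← add_mul, ← C_add, h, C_0, zero_mul]
    rw [Finset.card_eq_zero.2]
    · norm_num
    refine Finset.eq_empty_of_forall_notMem fun t ht => ?_
    obtain ⟨t0, e⟩ := hF t ht
    rw [ev, ← add_mul] at e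
    exact mul_ne_zero hab (pow_ne_zero _ t0) e
  · refine two_term (a := a) (b := b) (i := p) (j := q) (by exact_mod_cast hpq) ?_ F ?_
    · by_contra! h
      apply hP0
      rw [hP, h.1, h.2]; simp
    · intro t ht
      obtain ⟨t0, e⟩ := hF t ht
      rw [ev] at e
      exact ⟨t0, by exact_mod_cast e⟩

lemma mono_count {a b e : ℚ_[2]} {p p' q q' M : ℕ} {P Q : ℚ_[2][X]} (hP : P = C e * X ^ M)
    (hQ : Q = C a * (X ^ p * P ^ q) + C b * (X ^ p' * P ^ q'))
    (hQ0 : Q ≠ 0) (F : Finset ℚ_[2]) (hF : ∀ x ∈ F, x ≠ 0 ∧ Q.eval x = 0) : F.card ≤ 2 := by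
  refine bpoly_count (a := a * e ^ q) (b := b * e ^ q') (p := p + M * q) (q := p' + M * q')
    (P := Q) ?_ hQ0 F hF
  rw [hQ, hP]
  simp only [mul_pow, C_mul, C_pow, pow_add, pow_mul]
  ring

lemma second_count {c d a b : ℚ_[2]} {m n p p' q q' : ℕ} {P Q : ℚ_[2][X]}
    (hP : P = C c * X ^ m + C d * X ^ n)
    (hQ : Q = C a * (X ^ p * P ^ q) + C b * (X ^ p' * P ^ q'))
    (hQ0 : Q ≠ 0) (F : Finset ℚ_[2])
    (hF : ∀ x ∈ F, x ≠ 0 ∧ (P = 0 ∨ P.eval x ≠ 0) ∧ Q.eval x = 0) : F.card ≤ 12 := by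
  have hF' : ∀ x ∈ F, x ≠ 0 ∧ Q.eval x = 0 := fun x hx => ⟨(hF x hx).1, (hF x hx).2.2⟩
  by_cases hc : c = 0
  · exact (mono_count (e := d) (M := n) (by rw [hP, hc]; simp) hQ hQ0 F hF').trans (by norm_num)
  by_cases hd : d = 0
  · exact (mono_count (e := c) (M := m) (by rw [hP, hd]; simp) hQ hQ0 F hF').trans (by norm_num)
  by_cases hmn : m = n
  · exact (mono_count (e := c + d) (M := m) (by rw [hP, hmn, C_add]; ring) hQ hQ0 F hF').trans
      (by norm_num)
  have hP0 : P ≠ 0 := by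
    intro h
    have := congrArg (fun R => R.coeff m) (hP.symm.trans h)
    simp [coeff_X_pow, hmn, hc] at this
  have evP : ∀ x, P.eval x = c * x ^ m + d * x ^ n := by intro x; rw [hP]; simp
  have evQ : ∀ x, Q.eval x = a * (x ^ p * P.eval x ^ q) + b * (x ^ p' * P.eval x ^ q') := by
    intro x; rw [hQ]; simp
  have hFP : ∀ x ∈ F, P.eval x ≠ 0 := fun x hx => (hF x hx).2.1.resolve_left hP0
  rcases F.eq_empty_or_nonempty with rfl | ⟨z, hz⟩
  · simp
  have ez := (hF z hz).2.2
  rw [evQ] at ez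
  have z1 : ∀ r s : ℕ, z ^ r * P.eval z ^ s ≠ 0 := fun r s =>
    mul_ne_zero (pow_ne_zero _ (hF z hz).1) (pow_ne_zero _ (hFP z hz))
  have ha : a ≠ 0 := by
    intro ha
    have hb : b = 0 := by
      rw [ha, zero_mul, zero_add] at ez
      exact (mul_eq_zero.1 ez).resolve_right (z1 _ _)
    apply hQ0; rw [hQ, ha, hb]; simp
  refine pair_count (c := c) (d := d) (m := m) (n := n) (α := (p : ℤ) - p') (β := (q' : ℤ) - q)
    (γ := -b / a) hc hd (by exact_mod_cast hmn) ?_ (fun x => P.eval x) F ?_ ?_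
  · rintro ⟨h1, h2⟩
    have h1 : p = p' := by omega
    have h2 : q' = q := by omega
    subst h1 h2
    rw [← add_mul] at ez
    have hab := (mul_eq_zero.1 ez).resolve_right (z1 _ _)
    apply hQ0
    rw [hQ, ← add_mul, ← C_add, hab, C_0, zero_mul]
  · intro x hx
    refine ⟨(hF x hx).1, hFP x hx, ?_⟩
    simp only [evP]; norm_cast
  · intro x hx
    have e := (hF x hx).2.2
    have x0 := (hF x hx).1
    have y0 := hFP x hx
    rw [evQ] at e
    generalize P.eval x = y at *
    rw [zpow_sub₀ x0, zpow_sub₀ y0]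
    simp only [zpow_natCast]
    field_simp
    linear_combination e

/-- Every polynomial has a presentation (Horner). -/
lemma exists_pres {L : Type*} [Field L] (f : L[X]) : ∃ s, HasAddComplexityPres f s := by
  have hco : ∀ (k i : ℕ), (divX^[k] f).coeff i = f.coeff (i + k) := by
    intro k
    induction k with
    | zero => simp
    | succ k ih =>
      intro i
      rw [Function.iterate_succ_apply', coeff_divX, ih]
      congr 1; omega
  set n := f.natDegree with hn
  refine ⟨n + 1, fun j => if j = 1 then 0 else 1, fun j => (divX^[n + 1 - j] f).coeff 0,
    fun i j => if j = n + 2 then (if i = n + 1 then 1 else 0) else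
      if i = 0 ∨ i = j - 1 then 1 else 0, fun _ _ => 0,
    fun j => if j = 0 then X else divX^[n + 1 - j] f, by simp, ?_, ?_⟩
  · intro j h1 h2
    have hj0 : j ≠ 0 := by omega
    have hj : j ≠ n + 2 := by omega
    have hdiv : divX^[n + 1 - j] f = X * divX^[n + 1 - j + 1] f + C ((divX^[n + 1 - j] f).coeff 0) := by
      rw [Function.iterate_succ_apply', X_mul_divX_add]
    by_cases hj1 : j = 1
    · subst hj1
      simp only [Nat.add_sub_cancel] at hdiv ⊢
      have hz : divX^[n + 1] f = 0 := by
        ext i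
        rw [hco, coeff_zero]
        exact coeff_eq_zero_of_natDegree_lt (by omega)
      rw [hz, mul_zero, zero_add] at hdiv
      simpa using hdiv
    · obtain ⟨l, rfl⟩ : ∃ l, j = l + 2 := ⟨j - 2, by omega⟩
      have e1 : n + 1 - (l + 2) + 1 = n + 1 - (l + 1) := by omega
      rw [e1] at hdiv
      simp only [hj, hj0, hj1, if_false, pow_zero, Finset.prod_const_one, mul_one, map_one, one_mul]
      conv_lhs => rw [hdiv]
      congr 1
      rw [Finset.prod_range_succ, Finset.prod_range_succ', Finset.prod_eq_one]
      · simp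
      · intro i hi
        rw [Finset.mem_range] at hi
        have : ¬ (i + 1 = 0 ∨ i + 1 = l + 2 - 1) := by omega
        simp [this]
        intro h; omega
  · rw [Finset.prod_range_succ, Finset.prod_eq_one]
    · simp
    · intro i hi
      rw [Finset.mem_range] at hi
      have : i ≠ n + 1 := by omega
      simp only [this, if_false, if_true, pow_zero]

end TwoAdicAux

open TwoAdicAux in
theorem twoadic_root_count_sigma_le_two_sharp
    (f : Polynomial ℚ_[2]) (hf : f ≠ 0) (hσ : addComplexity f ≤ 2) :
    {x : ℚ_[2] | f.eval x = 0}.ncard ≤ 15 := by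
  classical
  have hmem : HasAddComplexityPres f (addComplexity f) :=
    Nat.sInf_mem (s := {s | HasAddComplexityPres f s}) (exists_pres f)
  generalize addComplexity f = s at hσ hmem
  obtain ⟨c, d, m, m', Xs, h0, hX, hfe⟩ := hmem
  have hset : {x : ℚ_[2] | f.eval x = 0} = ↑(f.roots.toFinset) := by
    ext x; simp [hf]
  rw [hset, Set.ncard_coe_finset]
  -- each root is a root of some nonzero `Xs i`
  have hroot : ∀ x ∈ f.roots.toFinset, ∃ i, i ≤ s ∧ Xs i ≠ 0 ∧ (Xs i).eval x = 0 := by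
    intro x hx
    have hx' : f.eval x = 0 := by simpa [hf] using hx
    have hc0 : c (s + 1) ≠ 0 := by
      intro h; apply hf; rw [hfe, h]; simp
    have hprod : ∏ i ∈ Finset.range (s + 1), Xs i ^ m i (s + 1) ≠ 0 := by
      intro h; apply hf; rw [hfe, h]; simp
    rw [hfe, eval_mul, eval_C, eval_prod] at hx'
    obtain ⟨i, hi, hi0⟩ := Finset.prod_eq_zero_iff.1 ((mul_eq_zero.1 hx').resolve_left hc0)
    rw [eval_pow, pow_eq_zero_iff'] at hi0
    refine ⟨i, by rw [Finset.mem_range] at hi; omega, ?_, hi0.1⟩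
    intro h
    apply hprod
    apply Finset.prod_eq_zero hi
    rw [h, zero_pow hi0.2]
  set R := f.roots.toFinset
  set R1 := R.filter (fun x => x ≠ 0 ∧ 1 ≤ s ∧ Xs 1 ≠ 0 ∧ (Xs 1).eval x = 0) with hR1
  set R2 := R.filter (fun x => x ≠ 0 ∧ 2 ≤ s ∧ Xs 2 ≠ 0 ∧ (Xs 1 = 0 ∨ (Xs 1).eval x ≠ 0) ∧
    (Xs 2).eval x = 0) with hR2
  have hsub : R ⊆ {0} ∪ R1 ∪ R2 := by
    intro x hx
    by_cases x0 : x = 0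
    · simp [x0]
    obtain ⟨i, hi, hne, hev⟩ := hroot x hx
    have hi2 : i ≤ 2 := hi.trans hσ
    interval_cases i
    · rw [h0] at hev; simp at hev; exact absurd hev x0
    · simp only [Finset.mem_union, hR1, Finset.mem_filter]
      exact Or.inl (Or.inr ⟨hx, x0, hi, hne, hev⟩)
    · simp only [Finset.mem_union, hR1, hR2, Finset.mem_filter]
      by_cases h1 : Xs 1 = 0 ∨ (Xs 1).eval x ≠ 0
      · exact Or.inr ⟨hx, x0, hi, hne, h1, hev⟩
      · push Not at h1
        exact Or.inl (Or.inr ⟨hx, x0, by omega, h1⟩)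
  have hcard := (Finset.card_le_card hsub).trans ((Finset.card_union_le _ _).trans
    (Nat.add_le_add_right (Finset.card_union_le _ _) _))
  have e1 : 1 ≤ s → Xs 1 = C (c 1) * X ^ m 0 1 + C (d 1) * X ^ m' 0 1 := by
    intro hs
    have := hX 1 le_rfl hs
    simpa [h0] using this
  have c1 : R1.card ≤ 2 := by
    rcases R1.eq_empty_or_nonempty with h | ⟨z, hz⟩
    · simp [h]
    obtain ⟨-, -, hs, hne, -⟩ := Finset.mem_filter.1 hz
    refine bpoly_count (e1 hs) hne R1 fun x hx => ?_
    have := (Finset.mem_filter.1 hx).2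
    exact ⟨this.1, this.2.2.2⟩
  have c2 : R2.card ≤ 12 := by
    rcases R2.eq_empty_or_nonempty with h | ⟨z, hz⟩
    · simp [h]
    obtain ⟨-, -, hs, hne, -⟩ := Finset.mem_filter.1 hz
    have e2 := hX 2 (by norm_num) hs
    simp only [Finset.prod_range_succ, Finset.prod_range_zero, one_mul, h0] at e2
    refine second_count (e1 (by omega)) e2 hne R2 fun x hx => ?_
    have := (Finset.mem_filter.1 hx).2
    exact ⟨this.1, this.2.2.2.1, this.2.2.2.2⟩
  rw [Finset.card_singleton] at hcard
  omega
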